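/- arXiv:1906.08129 — 7 statements merged into one kernel-verified Lean document; each statement's English description precedes it below -/
import Mathlib

section
/- Let 𝒴 be a finite set of K ≥ 1 classes, p a probability mass function on 𝒴, and g : {1,…,K} → [0,1] any sequence. Then the maximum of the expected set-based utility U(Ŷ) = g(|Ŷ|)·∑_{c∈Ŷ} p(c) over all nonempty subsets Ŷ ⊆ 𝒴 equals max_{1 ≤ s ≤ K} g(s)·∑_{i=1}^{s} p_i, where p_1 ≥ p_2 ≥ … ≥ p_K are the values of p sorted in decreasing order. In particular, the Bayes-optimal set-valued prediction is attained by one of the K 'top-s' sets consisting of the s classes with highest probability, so only K subsets need to be evaluated. -/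
/-!
Among the sets of a fixed size `s` the factor `g s ≥ 0` is constant, so utility is maximised by
maximising total mass. A competitor of the top-`s` set differs from it by exchanging some of its
classes for equally many others, none of them more probable, so it has no more mass. What remains is
a maximum over the finitely many sizes.
-/

open Finset

theorem sum_le_sum_of_card_eq_of_forall_exchange_le {ι M : Type*} [AddCommMonoid M]
    [PartialOrder M] [IsOrderedAddMonoid M] {s t : Finset ι} {f : ι → M} (hcard : #s = #t)
    (hle : ∀ i ∈ s, i ∉ t → ∀ j ∈ t, j ∉ s → f i ≤ f j) :
    ∑ i ∈ s, f i ≤ ∑ j ∈ t, f j := by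
  classical
  let e : ↥(s \ t) ≃ ↥(t \ s) := equivOfCardEq (card_sdiff_comm hcard)
  have hexchange (i : ↥(s \ t)) : f i ≤ f (e i) := by
    obtain ⟨his, hit⟩ := mem_sdiff.1 i.2
    obtain ⟨hjt, hjs⟩ := mem_sdiff.1 (e i).2
    exact hle i his hit (e i) hjt hjs
  have hsdiff : ∑ i ∈ s \ t, f i ≤ ∑ j ∈ t \ s, f j :=
    calc ∑ i ∈ s \ t, f i = ∑ i : ↥(s \ t), f i := (sum_coe_sort _ f).symm
      _ ≤ ∑ i : ↥(s \ t), f (e i) := sum_le_sum fun i _ ↦ hexchange i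
      _ = ∑ j : ↥(t \ s), f j := e.sum_comp fun j ↦ f j
      _ = ∑ j ∈ t \ s, f j := sum_coe_sort _ f
  calc ∑ i ∈ s, f i = ∑ i ∈ s ∩ t, f i + ∑ i ∈ s \ t, f i := (sum_inter_add_sum_sdiff s t f).symm
    _ ≤ ∑ j ∈ t ∩ s, f j + ∑ j ∈ t \ s, f j := by rw [inter_comm]; gcongr
    _ = ∑ j ∈ t, f j := sum_inter_add_sum_sdiff t s f

section TopSet

variable {Y : Type*} {K : ℕ}

/-- The top-`s` set: the first `s` classes in the enumeration `σ`, which is thought of as listing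
the classes by decreasing probability. It is all of `Y` when `s ≥ K`. -/
def topSet (σ : Fin K ≃ Y) (s : ℕ) : Finset Y :=
  ({i : Fin K | (i : ℕ) < s} : Finset (Fin K)).map σ.toEmbedding

theorem mem_topSet {σ : Fin K ≃ Y} {s : ℕ} {c : Y} : c ∈ topSet σ s ↔ (σ.symm c : ℕ) < s := by
  simp [topSet, mem_map_equiv]

theorem card_topSet (σ : Fin K ≃ Y) {s : ℕ} (hs : s ≤ K) : #(topSet σ s) = s := by
  rw [topSet, card_map, Fin.card_filter_val_lt, min_eq_right hs]

theorem card_le_of_equiv_fin (σ : Fin K ≃ Y) (S : Finset Y) : #S ≤ K := by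
  simpa using card_le_univ (S.map σ.symm.toEmbedding)

theorem sum_le_sum_topSet {M : Type*} [AddCommMonoid M] [PartialOrder M] [IsOrderedAddMonoid M]
    {p : Y → M} {σ : Fin K ≃ Y} (hσ : Antitone (p ∘ σ)) (S : Finset Y) :
    ∑ c ∈ S, p c ≤ ∑ c ∈ topSet σ #S, p c := by
  refine sum_le_sum_of_card_eq_of_forall_exchange_le
    (card_topSet σ (card_le_of_equiv_fin σ S)).symm fun c _ hc d hd _ ↦ ?_
  have hdc : σ.symm d ≤ σ.symm c := (mem_topSet.1 hd).le.trans (not_lt.1 (mt mem_topSet.2 hc))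
  simpa using hσ hdc

end TopSet

section SetUtility

variable {Y R : Type*} [Semiring R] {K : ℕ}

/-- The expected set-based utility `U(S) = g(|S|) · ∑_{c ∈ S} p(c)` of predicting the set `S`. -/
def setUtility (g : ℕ → R) (p : Y → R) (S : Finset Y) : R :=
  g #S * ∑ c ∈ S, p c

theorem setUtility_topSet (g : ℕ → R) (p : Y → R) (σ : Fin K ≃ Y) {s : ℕ} (hs : s ≤ K) :
    setUtility g p (topSet σ s) = g s * ∑ i : Fin K with i.val < s, p (σ i) := by
  rw [setUtility, card_topSet σ hs, topSet, sum_map]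
  rfl

theorem setUtility_le_setUtility_topSet [PartialOrder R] [IsOrderedRing R] {g : ℕ → R} {p : Y → R}
    {σ : Fin K ≃ Y} (hσ : Antitone (p ∘ σ)) {S : Finset Y} (hg : 0 ≤ g #S) :
    setUtility g p S ≤ setUtility g p (topSet σ #S) := by
  rw [setUtility, setUtility, card_topSet σ (card_le_of_equiv_fin σ S)]
  exact mul_le_mul_of_nonneg_left (sum_le_sum_topSet hσ S) hg

theorem stmt_0_general [LinearOrder R] [IsOrderedRing R] (hK : 1 ≤ K) (p : Y → R) (g : ℕ → R)
    (hg : ∀ s, 1 ≤ s → s ≤ K → 0 ≤ g s) (σ : Fin K ≃ Y) (hσ : Antitone (p ∘ σ)) :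
    ∃ M : R,
      IsGreatest {x : R | ∃ S : Finset Y, S.Nonempty ∧ x = g #S * ∑ c ∈ S, p c} M ∧
      IsGreatest {x : R | ∃ s : ℕ, 1 ≤ s ∧ s ≤ K ∧
        x = g s * ∑ i : Fin K with i.val < s, p (σ i)} M := by
  obtain ⟨m, hm, hmax⟩ := exists_max_image (Icc 1 K) (fun s ↦ setUtility g p (topSet σ s))
    (nonempty_Icc.2 hK)
  obtain ⟨hm1, hmK⟩ := mem_Icc.1 hm
  refine ⟨setUtility g p (topSet σ m), ⟨⟨topSet σ m, ?_, rfl⟩, ?_⟩,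
    ⟨m, hm1, hmK, setUtility_topSet g p σ hmK⟩, ?_⟩
  · rwa [← card_pos, card_topSet σ hmK]
  · rintro _ ⟨S, hS, rfl⟩
    have hSK : #S ≤ K := card_le_of_equiv_fin σ S
    exact (setUtility_le_setUtility_topSet hσ (hg _ hS.card_pos hSK)).trans
      (hmax _ (mem_Icc.2 ⟨hS.card_pos, hSK⟩))
  · rintro _ ⟨s, hs1, hsK, rfl⟩
    rw [← setUtility_topSet g p σ hsK]
    exact hmax s (mem_Icc.2 ⟨hs1, hsK⟩)

end SetUtility

/-- The maximum of the expected set-based utility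
`U(Ŷ) = g(|Ŷ|) · ∑_{c∈Ŷ} p(c)` over all nonempty subsets `Ŷ ⊆ 𝒴` equals
`max_{1 ≤ s ≤ K} g(s) · ∑_{i=1}^s p_i`, where `p_1 ≥ … ≥ p_K` are the sorted
probabilities (here given via an antitone enumeration `σ : Fin K ≃ Y`). -/
theorem stmt_0 {Y : Type*} [Fintype Y] [DecidableEq Y] (K : ℕ) (hK : 1 ≤ K)
    (hcard : Fintype.card Y = K)
    (p : Y → ℝ) (hp0 : ∀ c, 0 ≤ p c) (hp1 : ∑ c, p c = 1)
    (g : ℕ → ℝ) (hg : ∀ s, 1 ≤ s → s ≤ K → 0 ≤ g s ∧ g s ≤ 1)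
    (σ : Fin K ≃ Y) (hσ : ∀ i j : Fin K, i ≤ j → p (σ j) ≤ p (σ i)) :
    ∃ M : ℝ,
      IsGreatest {x : ℝ | ∃ S : Finset Y, S.Nonempty ∧ x = g S.card * ∑ c ∈ S, p c} M ∧
      IsGreatest {x : ℝ | ∃ s : ℕ, 1 ≤ s ∧ s ≤ K ∧
        x = g s * ∑ i ∈ Finset.univ.filter (fun i : Fin K => (i : ℕ) < s), p (σ i)} M :=
  stmt_0_general hK p g (fun s hs1 hsK ↦ (hg s hs1 hsK).1) σ hσ
end

section
/- Let K ≥ 3, let g : {1,…,K} → (0,∞) be a decreasing (g(s) ≥ g(s+1)) and (1/x)-convex sequence, and let p_1 ≥ p_2 ≥ … ≥ p_K ≥ 0. Define U_s = g(s)·∑_{i=1}^{s} p_i. Then for every s ∈ {1,…,K−2}, the implication U_s > U_{s+1} ⟹ U_{s+1} > U_{s+2} holds. -/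
/-!
Write `U s = S s / a s` with `S s = ∑_{i=1}^s p i`, a concave sequence since `p` decreases, and
`a s = 1 / g s`, a convex sequence. For `t = U (s + 1) ≥ 0` the sequence `S - t • a` is concave and
vanishes at `s + 1`; if it is positive at `s`, it must be negative at `s + 2`.
-/

theorem div_lt_div_of_add_le_two_mul {𝕜 : Type*} [Field 𝕜] [LinearOrder 𝕜] [IsStrictOrderedRing 𝕜]
    {x₀ x₁ x₂ a₀ a₁ a₂ : 𝕜} (ha₀ : 0 < a₀) (ha₁ : 0 < a₁) (ha₂ : 0 < a₂) (hx₁ : 0 ≤ x₁)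
    (hx : x₀ + x₂ ≤ 2 * x₁) (ha : 2 * a₁ ≤ a₀ + a₂) (h : x₁ / a₁ < x₀ / a₀) :
    x₂ / a₂ < x₁ / a₁ := by
  set t := x₁ / a₁
  have ht_nonneg : 0 ≤ t := div_nonneg hx₁ ha₁.le
  have hx₁_eq : x₁ = t * a₁ := (div_mul_cancel₀ x₁ ha₁.ne').symm
  have hx₀_gt : t * a₀ < x₀ := (lt_div_iff₀ ha₀).mp h
  rw [div_lt_iff₀ ha₂]
  calc
    x₂ ≤ 2 * x₁ - x₀ := by linarith
    _ < 2 * x₁ - t * a₀ := by gcongr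
    _ = t * (2 * a₁ - a₀) := by rw [hx₁_eq]; ring
    _ ≤ t * a₂ := mul_le_mul_of_nonneg_left (by linarith) ht_nonneg

theorem sum_Icc_add_sum_Icc_le_two_nsmul {M : Type*} [AddCommMonoid M] [Preorder M]
    [AddLeftMono M] {p : ℕ → M} {m s : ℕ} (hms : m ≤ s + 1) (hp : p (s + 2) ≤ p (s + 1)) :
    ∑ i ∈ Finset.Icc m s, p i + ∑ i ∈ Finset.Icc m (s + 2), p i ≤
      2 • ∑ i ∈ Finset.Icc m (s + 1), p i := by
  have sum_succ : ∑ i ∈ Finset.Icc m (s + 1), p i = ∑ i ∈ Finset.Icc m s, p i + p (s + 1) :=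
    Finset.sum_Icc_succ_top hms p
  calc
    ∑ i ∈ Finset.Icc m s, p i + ∑ i ∈ Finset.Icc m (s + 2), p i
      = ∑ i ∈ Finset.Icc m s, p i + (∑ i ∈ Finset.Icc m (s + 1), p i + p (s + 2)) := by
        rw [Finset.sum_Icc_succ_top (by lia : m ≤ s + 1 + 1)]
    _ ≤ ∑ i ∈ Finset.Icc m s, p i + (∑ i ∈ Finset.Icc m (s + 1), p i + p (s + 1)) := by gcongr
    _ = 2 • ∑ i ∈ Finset.Icc m (s + 1), p i := by rw [sum_succ, two_nsmul]; abel

theorem stmt_1_general {𝕜 : Type*} [Field 𝕜] [LinearOrder 𝕜] [IsStrictOrderedRing 𝕜]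
    {K : ℕ} {g p : ℕ → 𝕜}
    (hgpos : ∀ s, 1 ≤ s → s ≤ K → 0 < g s)
    (hgconv : ∀ s, 1 ≤ s → s + 2 ≤ K → 1 / g (s + 1) ≤ (1 / g s + 1 / g (s + 2)) / 2)
    (hpsum : ∀ s, 1 ≤ s → s ≤ K → 0 ≤ ∑ i ∈ Finset.Icc 1 s, p i)
    (hpdec : ∀ i, 1 ≤ i → i + 1 ≤ K → p (i + 1) ≤ p i)
    {U : ℕ → 𝕜} (hU : ∀ s, U s = g s * ∑ i ∈ Finset.Icc 1 s, p i)
    {s : ℕ} (hs : 1 ≤ s) (hsK : s + 2 ≤ K) (h : U (s + 1) < U s) :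
    U (s + 2) < U (s + 1) := by
  have U_eq_div (n : ℕ) : U n = (∑ i ∈ Finset.Icc 1 n, p i) / (1 / g n) := by
    rw [hU, one_div, div_inv_eq_mul, mul_comm]
  have sum_concave := sum_Icc_add_sum_Icc_le_two_nsmul (m := 1) (by lia)
    (hpdec (s + 1) (by lia) hsK)
  rw [two_nsmul, ← two_mul] at sum_concave
  have inv_convex : 2 * (1 / g (s + 1)) ≤ 1 / g s + 1 / g (s + 2) := by
    linarith [hgconv s hs hsK]
  have inv_pos (n : ℕ) (hn : 1 ≤ n) (hnK : n ≤ K) : 0 < 1 / g n := one_div_pos.mpr (hgpos n hn hnK)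
  simp only [U_eq_div] at h ⊢
  exact div_lt_div_of_add_le_two_mul (inv_pos s hs (by lia)) (inv_pos (s + 1) (by lia) (by lia))
    (inv_pos (s + 2) (by lia) hsK) (hpsum (s + 1) (by lia) (by lia)) sum_concave inv_convex h

/-- For a decreasing, positive, (1/x)-convex sequence `g` and
sorted nonnegative `p_1 ≥ … ≥ p_K`, with `U s = g s * ∑_{i=1}^s p_i`,
`U s > U (s+1)` implies `U (s+1) > U (s+2)` for every `s ∈ {1,…,K−2}`. -/
theorem stmt_1 (K : ℕ) (hK : 3 ≤ K) (g p : ℕ → ℝ)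
    (hgpos : ∀ s, 1 ≤ s → s ≤ K → 0 < g s)
    (hgdec : ∀ s, 1 ≤ s → s + 1 ≤ K → g (s + 1) ≤ g s)
    (hgconv : ∀ s, 1 ≤ s → s + 2 ≤ K →
      1 / g (s + 1) ≤ (1 / g s + 1 / g (s + 2)) / 2)
    (hpnn : ∀ i, 1 ≤ i → i ≤ K → 0 ≤ p i)
    (hpdec : ∀ i, 1 ≤ i → i + 1 ≤ K → p (i + 1) ≤ p i)
    (U : ℕ → ℝ) (hU : ∀ s, U s = g s * ∑ i ∈ Finset.Icc 1 s, p i) :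
    ∀ s, 1 ≤ s → s + 2 ≤ K → U s > U (s + 1) → U (s + 1) > U (s + 2) := by
  have sum_nonneg (s : ℕ) (_ : 1 ≤ s) (hsK : s ≤ K) : 0 ≤ ∑ i ∈ Finset.Icc 1 s, p i :=
    Finset.sum_nonneg fun i hi ↦
      hpnn i (Finset.mem_Icc.mp hi).1 ((Finset.mem_Icc.mp hi).2.trans hsK)
  exact fun s ↦ stmt_1_general hgpos hgconv sum_nonneg hpdec hU
end

section
/- Let 𝒴 be a finite set of K ≥ 2 classes, p a probability mass function on 𝒴, and g : {1,…,K} → (0,1] a decreasing (g(s) ≥ g(s+1)) and (1/x)-convex sequence. Let p_1 ≥ … ≥ p_K be the sorted probabilities and U_s = g(s)·∑_{i=1}^{s} p_i. Let s₀ be the smallest s ∈ {1,…,K−1} with U_s > U_{s+1}, and s₀ = K if no such s exists. Then the maximum of U(Ŷ) = g(|Ŷ|)·∑_{c∈Ŷ} p(c) over all nonempty subsets Ŷ ⊆ 𝒴 equals max_{1 ≤ s ≤ s₀} U_s; i.e., the early-stopping procedure that evaluates U_1, U_2, … and stops at the first strict decrease returns the Bayes-optimal expected utility. -/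
/-!
For each size `s`, the best set of size `s` consists of the `s` most probable classes, so it is
enough to maximise `U s = P s / (1 / g s)`, where `P s` is the sum of the `s` largest
probabilities. The numerator is nonnegative and concave in `s` because the summands decrease, and
the denominator is positive and convex. Such a quotient is unimodal: once it fails to increase, it
never increases again. Hence the first descent occurs at a global maximum.
-/

open Finset

section Unimodal

variable {α : Type*} [Preorder α]

theorem antitoneOn_Icc_of_descent_persists {f : ℕ → α} {s n : ℕ}
    (descent : s < n → f (s + 1) ≤ f s)
    (persists : ∀ t, s ≤ t → t + 2 ≤ n → f (t + 1) ≤ f t → f (t + 2) ≤ f (t + 1)) :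
    AntitoneOn f (Set.Icc s n) := by
  have add_one_le : ∀ t, s ≤ t → t < n → f (t + 1) ≤ f t := by
    intro t hst
    induction t, hst using Nat.le_induction with
    | base => exact descent
    | succ t hst ih => exact fun htn ↦ persists t hst htn (ih (by lia))
  exact antitoneOn_of_add_one_le Set.ordConnected_Icc fun t _ ht ht' ↦ add_one_le t ht.1 ht'.2

/-- A procedure that evaluates `f 1, f 2, …, f n` may stop at `s`: the values have not decreased
before `s`, and `f` does not increase at the next step unless `s` is already the last index `n`.
Stopping at the first strict decrease and stopping at the first weak one are both covered. -/
structure IsEarlyStop (f : ℕ → α) (n s : ℕ) : Prop where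
  one_le : 1 ≤ s
  le : s ≤ n
  le_add_one : ∀ t, 1 ≤ t → t < s → f t ≤ f (t + 1)
  add_one_le : s < n → f (s + 1) ≤ f s

theorem IsEarlyStop.isMaxOn {f : ℕ → α} {n s : ℕ} (hs : IsEarlyStop f n s)
    (persists : ∀ t, 1 ≤ t → t + 2 ≤ n → f (t + 1) ≤ f t → f (t + 2) ≤ f (t + 1)) :
    IsMaxOn f (Set.Icc 1 n) s := by
  have rises : MonotoneOn f (Set.Icc 1 s) :=
    monotoneOn_of_le_add_one Set.ordConnected_Icc fun t _ ht ht' ↦ hs.le_add_one t ht.1 ht'.2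
  have falls : AntitoneOn f (Set.Icc s n) :=
    antitoneOn_Icc_of_descent_persists hs.add_one_le fun t hst ↦ persists t (hs.one_le.trans hst)
  rintro t ⟨h1t, htn⟩
  rcases le_total t s with hts | hst
  · exact rises ⟨h1t, hts⟩ ⟨hs.one_le, le_rfl⟩ hts
  · exact falls ⟨le_rfl, hs.le⟩ ⟨hst, htn⟩ hst

theorem isEarlyStop_of_first_strict_descent {β : Type*} [LinearOrder β] {f : ℕ → β} {n s : ℕ}
    (hn : 1 ≤ n)
    (hs : (1 ≤ s ∧ s + 1 ≤ n ∧ f s > f (s + 1) ∧ ∀ t, 1 ≤ t → t < s → ¬ f t > f (t + 1)) ∨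
      (s = n ∧ ∀ t, 1 ≤ t → t + 1 ≤ n → ¬ f t > f (t + 1))) :
    IsEarlyStop f n s := by
  rcases hs with ⟨h1s, hsn, descent, no_descent⟩ | ⟨rfl, no_descent⟩
  · exact ⟨h1s, by lia, fun t h1t hts ↦ not_lt.1 (no_descent t h1t hts), fun _ ↦ descent.le⟩
  · exact ⟨hn, le_rfl, fun t h1t hts ↦ not_lt.1 (no_descent t h1t hts),
      fun hss ↦ (lt_irrefl s hss).elim⟩

end Unimodal

section PrefixSum

variable {M : Type*} {n s : ℕ}

/-- The sum of the first `s` terms of a finite sequence `q`. The index `s` is an arbitrary natural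
number; for `s ≥ n` this is the sum of all terms. -/
def prefixSum [AddCommMonoid M] (q : Fin n → M) (s : ℕ) : M :=
  ∑ i ∈ {i : Fin n | (i : ℕ) < s}, q i

theorem prefixSum_add_one [AddCommMonoid M] (q : Fin n → M) (hs : s < n) :
    prefixSum q (s + 1) = prefixSum q s + q ⟨s, hs⟩ := by
  have insert_eq : ({i | (i : ℕ) < s + 1} : Finset (Fin n)) =
      insert ⟨s, hs⟩ ({i | (i : ℕ) < s} : Finset (Fin n)) := by
    ext i
    simp only [mem_filter_univ, mem_insert, Fin.ext_iff]
    lia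
  rw [prefixSum, insert_eq, sum_insert (by simp), add_comm, prefixSum]

theorem exists_card_eq_and_sum_eq_prefixSum [AddCommMonoid M] {Y : Type*} (p : Y → M)
    (σ : Fin n ≃ Y) (hs : s ≤ n) :
    ∃ S : Finset Y, #S = s ∧ ∑ c ∈ S, p c = prefixSum (p ∘ σ) s := by
  refine ⟨({i | (i : ℕ) < s} : Finset (Fin n)).map σ.toEmbedding, ?_, sum_map _ _ _⟩
  rw [card_map, Fin.card_filter_val_lt, min_eq_right hs]

variable [AddCommMonoid M] [PartialOrder M] [IsOrderedAddMonoid M]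

theorem prefixSum_nonneg {q : Fin n → M} (hq : ∀ i, 0 ≤ q i) (s : ℕ) : 0 ≤ prefixSum q s :=
  sum_nonneg fun i _ ↦ hq i

theorem prefixSum_add_prefixSum_add_two_le {q : Fin n → M} (hq : Antitone q) (hs : s + 2 ≤ n) :
    prefixSum q s + prefixSum q (s + 2) ≤ prefixSum q (s + 1) + prefixSum q (s + 1) := by
  have last_le : q ⟨s + 1, by lia⟩ ≤ q ⟨s, by lia⟩ := hq (Fin.mk_le_mk.2 s.le_succ)
  calc prefixSum q s + prefixSum q (s + 2)
      = prefixSum q s + q ⟨s + 1, by lia⟩ + prefixSum q (s + 1) := by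
        rw [prefixSum_add_one q (s := s + 1) (by lia)]; abel
    _ ≤ prefixSum q s + q ⟨s, by lia⟩ + prefixSum q (s + 1) := by gcongr
    _ = prefixSum q (s + 1) + prefixSum q (s + 1) := by rw [← prefixSum_add_one]

theorem sum_le_prefixSum_card {q : Fin n → M} (hq : Antitone q) (T : Finset (Fin n)) :
    ∑ i ∈ T, q i ≤ prefixSum q #T := by
  induction T using Finset.induction_on_max with
  | empty => simp [prefixSum]
  | insert a T lt_a ih =>
    have ha : a ∉ T := fun h ↦ (lt_a a h).false
    have card_le : #T ≤ a := by
      simpa using card_le_card (show T ⊆ Iio a from fun i hi ↦ mem_Iio.2 (lt_a i hi))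
    have card_lt : #T < n := card_le.trans_lt a.isLt
    have q_le : q a ≤ q ⟨#T, card_lt⟩ := hq card_le
    rw [sum_insert ha, card_insert_of_notMem ha, prefixSum_add_one q card_lt, add_comm]
    exact add_le_add ih q_le

theorem sum_le_prefixSum_comp_card {Y : Type*} {p : Y → M} (σ : Fin n ≃ Y)
    (hσ : Antitone (p ∘ σ)) (S : Finset Y) : ∑ c ∈ S, p c ≤ prefixSum (p ∘ σ) #S := by
  simpa [sum_map] using sum_le_prefixSum_card hσ (S.map σ.symm.toEmbedding)

end PrefixSum

/-- The expected utility `U s = g s * (q 0 + ⋯ + q (s - 1))` of predicting the first `s` classes,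
when `q` lists the class probabilities in decreasing order. -/
def prefixUtility {R : Type*} [NonUnitalNonAssocSemiring R] {n : ℕ}
    (g : ℕ → R) (q : Fin n → R) (s : ℕ) : R :=
  g s * prefixSum q s

section Field

variable {𝕜 : Type*} [Field 𝕜] [LinearOrder 𝕜] [IsStrictOrderedRing 𝕜]

theorem div_le_div_of_concave_of_convex {a₀ a₁ a₂ b₀ b₁ b₂ : 𝕜}
    (hb₀ : 0 < b₀) (hb₁ : 0 < b₁) (hb₂ : 0 < b₂) (ha₁ : 0 ≤ a₁)
    (concave : a₀ + a₂ ≤ a₁ + a₁) (convex : b₁ ≤ (b₀ + b₂) / 2) (descent : a₁ / b₁ ≤ a₀ / b₀) :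
    a₂ / b₂ ≤ a₁ / b₁ := by
  set r := a₁ / b₁
  have r_nonneg : 0 ≤ r := div_nonneg ha₁ hb₁.le
  have a₁_eq : a₁ = r * b₁ := (div_mul_cancel₀ a₁ hb₁.ne').symm
  have le_a₀ : r * b₀ ≤ a₀ := (le_div_iff₀ hb₀).1 descent
  rw [div_le_iff₀ hb₂]
  calc a₂ ≤ a₁ + a₁ - a₀ := by linarith
    _ ≤ r * (2 * b₁ - b₀) := by linarith
    _ ≤ r * b₂ := mul_le_mul_of_nonneg_left (by linarith) r_nonneg

theorem prefixUtility_descent_persists {n s : ℕ} {g : ℕ → 𝕜} {q : Fin n → 𝕜}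
    (hq0 : ∀ i, 0 ≤ q i) (hq : Antitone q) (hs : s + 2 ≤ n)
    (hg₀ : 0 < g s) (hg₁ : 0 < g (s + 1)) (hg₂ : 0 < g (s + 2))
    (hgconv : 1 / g (s + 1) ≤ (1 / g s + 1 / g (s + 2)) / 2)
    (descent : prefixUtility g q (s + 1) ≤ prefixUtility g q s) :
    prefixUtility g q (s + 2) ≤ prefixUtility g q (s + 1) := by
  have eq_div : ∀ t, prefixUtility g q t = prefixSum q t / (1 / g t) := fun t ↦ by
    rw [prefixUtility, one_div, div_inv_eq_mul, mul_comm]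
  rw [eq_div, eq_div] at descent ⊢
  exact div_le_div_of_concave_of_convex (one_div_pos.2 hg₀) (one_div_pos.2 hg₁)
    (one_div_pos.2 hg₂) (prefixSum_nonneg hq0 _) (prefixSum_add_prefixSum_add_two_le hq hs)
    hgconv descent

theorem stmt_3_general {Y : Type*} {K : ℕ} {p : Y → 𝕜} (hp0 : ∀ c, 0 ≤ p c) {g : ℕ → 𝕜}
    (hgpos : ∀ s, 1 ≤ s → s ≤ K → 0 < g s)
    (hgconv : ∀ s, 1 ≤ s → s + 2 ≤ K → 1 / g (s + 1) ≤ (1 / g s + 1 / g (s + 2)) / 2)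
    (σ : Fin K ≃ Y) (hσ : Antitone (p ∘ σ)) {s₀ : ℕ}
    (hs₀ : IsEarlyStop (prefixUtility g (p ∘ σ)) K s₀) :
    IsGreatest {x | ∃ S : Finset Y, S.Nonempty ∧ x = g #S * ∑ c ∈ S, p c}
        (prefixUtility g (p ∘ σ) s₀) ∧
      IsGreatest {x | ∃ s, 1 ≤ s ∧ s ≤ s₀ ∧ x = prefixUtility g (p ∘ σ) s}
        (prefixUtility g (p ∘ σ) s₀) := by
  have le_stop : IsMaxOn (prefixUtility g (p ∘ σ)) (Set.Icc 1 K) s₀ :=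
    hs₀.isMaxOn fun t h1t htK ↦ prefixUtility_descent_persists (fun i ↦ hp0 (σ i)) hσ htK
      (hgpos t h1t (by lia)) (hgpos _ (by lia) (by lia)) (hgpos _ (by lia) htK) (hgconv t h1t htK)
  refine ⟨⟨?_, ?_⟩, ⟨s₀, hs₀.one_le, le_rfl, rfl⟩, ?_⟩
  · obtain ⟨S, hcard, hsum⟩ := exists_card_eq_and_sum_eq_prefixSum p σ hs₀.le
    exact ⟨S, card_pos.1 (hcard ▸ hs₀.one_le), by rw [hcard, hsum, prefixUtility]⟩
  · rintro x ⟨S, hS, rfl⟩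
    have card_le : #S ≤ K := by simpa using card_le_univ (S.map σ.symm.toEmbedding)
    calc g #S * ∑ c ∈ S, p c
        ≤ prefixUtility g (p ∘ σ) #S :=
          mul_le_mul_of_nonneg_left (sum_le_prefixSum_comp_card σ hσ S)
            (hgpos _ hS.card_pos card_le).le
      _ ≤ prefixUtility g (p ∘ σ) s₀ := le_stop ⟨hS.card_pos, card_le⟩
  · rintro x ⟨s, h1s, hs, rfl⟩
    exact le_stop ⟨h1s, hs.trans hs₀.le⟩

end Field

/-- Early stopping is Bayes-optimal.  With sorted probabilities
(via an antitone enumeration `σ`), `U s = g s * (sum of the `s` largest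
probabilities)`, and `s₀` the smallest `s ∈ {1,…,K−1}` with `U s > U (s+1)`
(`s₀ = K` if none exists), the maximum of the expected utility over all
nonempty subsets equals `max_{1 ≤ s ≤ s₀} U s`. -/
theorem stmt_3 {Y : Type*} [Fintype Y] [DecidableEq Y] (K : ℕ) (hK : 2 ≤ K)
    (hcard : Fintype.card Y = K)
    (p : Y → ℝ) (hp0 : ∀ c, 0 ≤ p c) (hp1 : ∑ c, p c = 1)
    (g : ℕ → ℝ)
    (hgpos : ∀ s, 1 ≤ s → s ≤ K → 0 < g s)
    (hgle1 : ∀ s, 1 ≤ s → s ≤ K → g s ≤ 1)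
    (hgdec : ∀ s, 1 ≤ s → s + 1 ≤ K → g (s + 1) ≤ g s)
    (hgconv : ∀ s, 1 ≤ s → s + 2 ≤ K →
      1 / g (s + 1) ≤ (1 / g s + 1 / g (s + 2)) / 2)
    (σ : Fin K ≃ Y) (hσ : ∀ i j : Fin K, i ≤ j → p (σ j) ≤ p (σ i))
    (U : ℕ → ℝ)
    (hU : ∀ s, U s = g s * ∑ i ∈ Finset.univ.filter (fun i : Fin K => (i : ℕ) < s), p (σ i))
    (s₀ : ℕ)
    (hs₀ : (1 ≤ s₀ ∧ s₀ + 1 ≤ K ∧ U s₀ > U (s₀ + 1) ∧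
              ∀ t, 1 ≤ t → t < s₀ → ¬ U t > U (t + 1)) ∨
           (s₀ = K ∧ ∀ t, 1 ≤ t → t + 1 ≤ K → ¬ U t > U (t + 1))) :
    ∃ M : ℝ,
      IsGreatest {x : ℝ | ∃ S : Finset Y, S.Nonempty ∧ x = g S.card * ∑ c ∈ S, p c} M ∧
      IsGreatest {x : ℝ | ∃ s : ℕ, 1 ≤ s ∧ s ≤ s₀ ∧ x = U s} M := by
  obtain rfl : U = prefixUtility g (p ∘ σ) := funext hU
  exact ⟨_, stmt_3_general hp0 hgpos hgconv σ hσ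
    (isEarlyStop_of_first_strict_descent (one_le_two.trans hK) hs₀)⟩
end

section
/- Let 𝒴 be a finite set of K ≥ 2 classes, p a probability mass function on 𝒴, and g : {1,…,K} → ℝ a sequence with g(1) = 1. If g(s) < 1/s for every s ∈ {2,…,K}, then every subset Ŷ ⊆ 𝒴 with |Ŷ| ≥ 2 satisfies U(Ŷ) < max_{c∈𝒴} p(c); consequently, every maximizer of the expected utility U over nonempty subsets of 𝒴 is a singleton {c} with p(c) = max_{c'∈𝒴} p(c'). -/
/-!
If every class in `S` has probability at most `M`, then `S` has mass at most `|S| * M`, so a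
discount factor below `1 / |S|` pushes its utility below `M`, strictly because `M > 0`. When `M` is
the maximal probability, it is itself the utility of a singleton, so no set with two or more
elements can be optimal. The maximum is attained even for infinitely many classes: the
probabilities are summable, so only finitely many of them exceed any given positive one.
-/

open Filter Topology

/-- The expected set-based utility `U(S) = g(|S|) * ∑_{c ∈ S} p(c)` of predicting the set `S` under
the class weights `p`. The sequence `g` is total on `ℕ`, and the empty set has utility `0`. -/
def expectedUtility {Y R : Type*} [Semiring R] (g : ℕ → R) (p : Y → R) (S : Finset Y) : R :=
  g S.card * ∑ c ∈ S, p c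

theorem expectedUtility_singleton {Y R : Type*} [Semiring R] {g : ℕ → R} (hg1 : g 1 = 1)
    (p : Y → R) (c : Y) : expectedUtility g p {c} = p c := by
  simp [expectedUtility, hg1]

theorem mul_sum_lt_of_lt_one_div_card {Y 𝕜 : Type*} [Field 𝕜] [LinearOrder 𝕜]
    [IsStrictOrderedRing 𝕜] {S : Finset Y} {p : Y → 𝕜} {a M : 𝕜}
    (hp0 : ∀ c ∈ S, 0 ≤ p c) (hpM : ∀ c ∈ S, p c ≤ M) (hM : 0 < M) (ha : a < 1 / (S.card : 𝕜)) :
    a * ∑ c ∈ S, p c < M := by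
  have mass_le : ∑ c ∈ S, p c ≤ M * S.card := by
    simpa [mul_comm] using S.sum_le_card_nsmul p M hpM
  rcases (Finset.sum_nonneg hp0).eq_or_lt with mass_zero | mass_pos
  · simpa [← mass_zero] using hM
  · calc a * ∑ c ∈ S, p c
        < 1 / S.card * ∑ c ∈ S, p c := mul_lt_mul_of_pos_right ha mass_pos
      _ = (∑ c ∈ S, p c) / S.card := one_div_mul_eq_div _ _
      _ ≤ M := div_le_of_le_mul₀ S.card.cast_nonneg hM.le mass_le

theorem exists_eq_singleton_of_isMaxOn_expectedUtility {Y R : Type*} [Semiring R] [Preorder R]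
    {g : ℕ → R} {p : Y → R} {m : Y}
    (hg1 : g 1 = 1) (hm : ∀ c, p c ≤ p m)
    (hlt : ∀ S : Finset Y, 2 ≤ S.card → expectedUtility g p S < p m)
    {S : Finset Y} (hS : S.Nonempty)
    (hmax : IsMaxOn (expectedUtility g p) {T | T.Nonempty} S) :
    ∃ c, S = {c} ∧ ∀ c', p c' ≤ p c := by
  have le_utility : p m ≤ expectedUtility g p S :=
    expectedUtility_singleton hg1 p m ▸ hmax (Finset.singleton_nonempty m)
  have card_lt_two : S.card < 2 := lt_of_not_ge fun h => (hlt S h).not_ge le_utility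
  have card_eq_one : S.card = 1 := le_antisymm (Nat.le_of_lt_succ card_lt_two) hS.card_pos
  obtain ⟨c, rfl⟩ := Finset.card_eq_one.mp card_eq_one
  rw [expectedUtility_singleton hg1] at le_utility
  exact ⟨c, rfl, fun c' => (hm c').trans le_utility⟩

theorem exists_forall_le_of_tendsto_cofinite_of_lt {α β : Type*} [LinearOrder β]
    [TopologicalSpace β] [ClosedIciTopology β] {f : α → β} {b : β} (hf : Tendsto f cofinite (𝓝 b))
    {x₀ : α} (hx₀ : b < f x₀) : ∃ m, ∀ x, f x ≤ f m := by
  have finite_above : {x | f x₀ ≤ f x}.Finite := by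
    simpa using eventually_cofinite.mp (hf.eventually_lt_const hx₀)
  obtain ⟨m, hm₀, hm⟩ := Set.exists_max_image _ f finite_above ⟨x₀, le_rfl⟩
  exact ⟨m, fun x => (le_total (f x₀) (f x)).elim (hm x) fun h => h.trans hm₀⟩

theorem stmt_8_general {Y : Type*} {p : Y → ℝ} (hp0 : ∀ c, 0 ≤ p c) (hp : Summable p)
    (hp_ne : p ≠ 0) {g : ℕ → ℝ} (hg1 : g 1 = 1)
    (hgs : ∀ S : Finset Y, 2 ≤ S.card → g S.card < 1 / (S.card : ℝ)) :
    ∃ cstar : Y, (∀ c, p c ≤ p cstar) ∧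
      (∀ S : Finset Y, 2 ≤ S.card → expectedUtility g p S < p cstar) ∧
      (∀ S : Finset Y, S.Nonempty → IsMaxOn (expectedUtility g p) {T | T.Nonempty} S →
        ∃ c : Y, S = {c} ∧ ∀ c', p c' ≤ p c) := by
  obtain ⟨c₀, hc₀⟩ := Function.ne_iff.mp hp_ne
  have pos_c₀ : 0 < p c₀ := (hp0 c₀).lt_of_ne' hc₀
  obtain ⟨m, hm⟩ := exists_forall_le_of_tendsto_cofinite_of_lt hp.tendsto_cofinite_zero pos_c₀
  have utility_lt : ∀ S : Finset Y, 2 ≤ S.card → expectedUtility g p S < p m := fun S hS =>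
    mul_sum_lt_of_lt_one_div_card (fun c _ => hp0 c) (fun c _ => hm c) (pos_c₀.trans_le (hm c₀))
      (hgs S hS)
  exact ⟨m, hm, utility_lt, fun _ =>
    exists_eq_singleton_of_isMaxOn_expectedUtility hg1 hm utility_lt⟩

/-- If `g 1 = 1` and `g s < 1/s` for every `s ∈ {2,…,K}`, then
every subset of cardinality ≥ 2 has expected utility strictly below the
maximal probability; consequently every maximizer of the expected utility
over nonempty subsets is a singleton `{c}` with `p c` maximal. -/
theorem stmt_8 {Y : Type*} [Fintype Y] [DecidableEq Y] (K : ℕ) (hK : 2 ≤ K)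
    (hcard : Fintype.card Y = K)
    (p : Y → ℝ) (hp0 : ∀ c, 0 ≤ p c) (hp1 : ∑ c, p c = 1)
    (g : ℕ → ℝ) (hg1 : g 1 = 1)
    (hgs : ∀ s : ℕ, 2 ≤ s → s ≤ K → g s < 1 / (s : ℝ)) :
    ∃ cstar : Y, (∀ c, p c ≤ p cstar) ∧
      (∀ S : Finset Y, 2 ≤ S.card → g S.card * ∑ c ∈ S, p c < p cstar) ∧
      (∀ S : Finset Y, S.Nonempty →
        (∀ T : Finset Y, T.Nonempty →
          g T.card * ∑ c ∈ T, p c ≤ g S.card * ∑ c ∈ S, p c) →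
        ∃ c : Y, S = {c} ∧ ∀ c', p c' ≤ p c) :=
  stmt_8_general hp0 .of_finite (by rintro rfl; simp at hp1) hg1
    fun S hS => hgs S.card hS (hcard ▸ S.card_le_univ)
end

section
/- Let 𝒴 be a finite set, let P and P̂ be probability mass functions on 𝒴, and let u : 𝒴 × (2^𝒴 ∖ {∅}) → [0,1] be any set-based utility function. Suppose Ŷ* maximizes Ŷ ↦ ∑_{c∈𝒴} u(c,Ŷ)·P(c) over nonempty subsets of 𝒴, and Ŷ maximizes Ŷ' ↦ ∑_{c∈𝒴} u(c,Ŷ')·P̂(c) over nonempty subsets of 𝒴. Then the regret of Ŷ is bounded by twice the L1-estimation error: ∑_{c∈𝒴} u(c,Ŷ*)·P(c) − ∑_{c∈𝒴} u(c,Ŷ)·P(c) ≤ 2·∑_{c∈𝒴} |P(c) − P̂(c)|. -/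
section

variable {Y R : Type*} [CommRing R] [LinearOrder R] [IsOrderedRing R]

theorem sum_mul_le_mul_sum_abs (s : Finset Y) {f g : Y → R} {K : R} (hf : ∀ c ∈ s, |f c| ≤ K) :
    ∑ c ∈ s, f c * g c ≤ K * ∑ c ∈ s, |g c| := by
  rw [Finset.mul_sum]
  refine Finset.sum_le_sum fun c hc ↦ ?_
  calc f c * g c ≤ |f c| * |g c| := (le_abs_self _).trans_eq (abs_mul _ _)
    _ ≤ K * |g c| := by gcongr; exact hf c hc

/-- Bounding the gain `f - g` as a whole, rather than the errors in the expectations of `f` and `g`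
separately, is what avoids a factor of two. -/
theorem sum_mul_sub_sum_mul_le_of_sum_mul_le (s : Finset Y) {f g P Q : Y → R} {K : R}
    (hK : ∀ c ∈ s, |f c - g c| ≤ K) (hQ : ∑ c ∈ s, f c * Q c ≤ ∑ c ∈ s, g c * Q c) :
    ∑ c ∈ s, f c * P c - ∑ c ∈ s, g c * P c ≤ K * ∑ c ∈ s, |P c - Q c| :=
  calc ∑ c ∈ s, f c * P c - ∑ c ∈ s, g c * P c
    _ ≤ (∑ c ∈ s, f c * P c - ∑ c ∈ s, g c * P c)
          - (∑ c ∈ s, f c * Q c - ∑ c ∈ s, g c * Q c) :=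
        (le_sub_self_iff _).mpr (sub_nonpos.mpr hQ)
    _ = ∑ c ∈ s, (f c - g c) * (P c - Q c) := by
        simp only [← Finset.sum_sub_distrib]
        exact Finset.sum_congr rfl fun c _ ↦ by ring
    _ ≤ K * ∑ c ∈ s, |P c - Q c| := sum_mul_le_mul_sum_abs s hK

theorem stmt_10_general [Fintype Y] {D : Type*} {A : Set D} {a b : R} {u : Y → D → R}
    {P Phat : Y → R} {dstar dhat : D} (hu : ∀ c, ∀ d ∈ A, u c d ∈ Set.Icc a b)
    (hdstar : dstar ∈ A) (hdhat : dhat ∈ A)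
    (hmax : IsMaxOn (fun d ↦ ∑ c, u c d * Phat c) A dhat) :
    ∑ c, u c dstar * P c - ∑ c, u c dhat * P c ≤ (b - a) * ∑ c, |P c - Phat c| :=
  sum_mul_sub_sum_mul_le_of_sum_mul_le Finset.univ
    (fun c _ ↦ abs_sub_le_of_le_of_le (hu c dstar hdstar).1 (hu c dstar hdstar).2
      (hu c dhat hdhat).1 (hu c dhat hdhat).2) (hmax hdstar)

end

/-- Regret bound.  If `Ŷ*` maximizes the expected utility under
the true distribution `P` and `Ŷ` maximizes it under the estimate `P̂`,
then the regret of `Ŷ` under `P` is at most twice the L1-estimation error. -/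
theorem stmt_10 {Y : Type*} [Fintype Y] [DecidableEq Y]
    (P Phat : Y → ℝ)
    (hP0 : ∀ c, 0 ≤ P c) (hP1 : ∑ c, P c = 1)
    (hPhat0 : ∀ c, 0 ≤ Phat c) (hPhat1 : ∑ c, Phat c = 1)
    (u : Y → Finset Y → ℝ)
    (hu : ∀ (c : Y) (S : Finset Y), S.Nonempty → 0 ≤ u c S ∧ u c S ≤ 1)
    (Ystar Yhat : Finset Y) (hYstar : Ystar.Nonempty) (hYhat : Yhat.Nonempty)
    (hmaxP : ∀ S : Finset Y, S.Nonempty →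
      ∑ c, u c S * P c ≤ ∑ c, u c Ystar * P c)
    (hmaxPhat : ∀ S : Finset Y, S.Nonempty →
      ∑ c, u c S * Phat c ≤ ∑ c, u c Yhat * Phat c) :
    (∑ c, u c Ystar * P c) - (∑ c, u c Yhat * P c) ≤
      2 * ∑ c, |P c - Phat c| := by
  refine (stmt_10_general (A := {S | S.Nonempty}) hu hYstar hYhat
    (isMaxOn_iff.mpr hmaxPhat)).trans ?_
  gcongr
  norm_num
end

section
/- Let δ and γ be real numbers with 0 < γ < δ and let K ≥ 3 be an integer. Then the credal utility sequence g_{δ,γ}(s) = δ/s − γ/s², s ∈ {1,…,K}, is positive and (1/x)-convex: 1/g_{δ,γ}(s+1) ≤ (1/g_{δ,γ}(s) + 1/g_{δ,γ}(s+2))/2 for all s ∈ {1,…,K−2}. -/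
/-!
The reciprocal `1 / g x = x ^ 2 / (δ * x - γ)` is a square over an affine function. The map
`(u, v) ↦ u ^ 2 / v` is jointly convex on `v > 0`, which is Sedrakyan's inequality, and convexity
survives precomposition with the affine map `x ↦ (x, δ * x - γ)`. The inequality for sequences is
midpoint convexity at `s` and `s + 2`.
-/

open Set

section Convexity

variable {𝕜 : Type*} [Field 𝕜] [LinearOrder 𝕜] [IsStrictOrderedRing 𝕜]

theorem add_sq_div_add_le {u₁ u₂ v₁ v₂ : 𝕜} (hv₁ : 0 < v₁) (hv₂ : 0 < v₂) :
    (u₁ + u₂) ^ 2 / (v₁ + v₂) ≤ u₁ ^ 2 / v₁ + u₂ ^ 2 / v₂ := by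
  have hv : ∀ i ∈ Finset.univ, 0 < ![v₁, v₂] i := by simp [Fin.forall_fin_two, hv₁, hv₂]
  simpa using Finset.sq_sum_div_le_sum_sq_div Finset.univ ![u₁, u₂] hv

theorem convexOn_fst_sq_div_snd :
    ConvexOn 𝕜 {p : 𝕜 × 𝕜 | 0 < p.2} fun p ↦ p.1 ^ 2 / p.2 := by
  have hconvex : Convex 𝕜 {p : 𝕜 × 𝕜 | 0 < p.2} :=
    (convex_Ioi (0 : 𝕜)).linear_preimage (LinearMap.snd 𝕜 𝕜 𝕜)
  refine convexOn_iff_forall_pos.2 ⟨hconvex, ?_⟩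
  rintro ⟨u₁, v₁⟩ (hv₁ : 0 < v₁) ⟨u₂, v₂⟩ (hv₂ : 0 < v₂) a b ha hb -
  calc (a * u₁ + b * u₂) ^ 2 / (a * v₁ + b * v₂)
      ≤ (a * u₁) ^ 2 / (a * v₁) + (b * u₂) ^ 2 / (b * v₂) :=
        add_sq_div_add_le (mul_pos ha hv₁) (mul_pos hb hv₂)
    _ = a * (u₁ ^ 2 / v₁) + b * (u₂ ^ 2 / v₂) := by field_simp

theorem convexOn_affineMap_sq_div_affineMap {E : Type*} [AddCommGroup E] [Module 𝕜 E]
    (u v : E →ᵃ[𝕜] 𝕜) : ConvexOn 𝕜 {x | 0 < v x} fun x ↦ u x ^ 2 / v x :=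
  convexOn_fst_sq_div_snd.comp_affineMap (u.prod v)

theorem map_add_div_two_le_of_convexOn {s : Set 𝕜} {f : 𝕜 → 𝕜} (hf : ConvexOn 𝕜 s f)
    {x y : 𝕜} (hx : x ∈ s) (hy : y ∈ s) : f ((x + y) / 2) ≤ (f x + f y) / 2 := by
  have h := hf.2 hx hy one_half_pos.le one_half_pos.le (add_halves 1)
  simpa only [smul_eq_mul, one_div_mul_eq_div, ← add_div] using h

end Convexity

/-- The credal utility `g_{δ,γ}`, extended from positive integers to a field. At `x = 0` its value
is the junk value `0`. -/
def credalUtility {𝕜 : Type*} [Field 𝕜] (δ γ x : 𝕜) : 𝕜 :=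
  δ / x - γ / x ^ 2

theorem credalUtility_eq_div {𝕜 : Type*} [Field 𝕜] (δ γ : 𝕜) {x : 𝕜} (hx : x ≠ 0) :
    credalUtility δ γ x = (δ * x - γ) / x ^ 2 := by
  rw [credalUtility]
  field_simp

section CredalUtility

variable {𝕜 : Type*} [Field 𝕜] [LinearOrder 𝕜] [IsStrictOrderedRing 𝕜] (δ γ : 𝕜)

theorem credalUtility_pos_iff {x : 𝕜} (hx : 0 < x) : 0 < credalUtility δ γ x ↔ γ < δ * x := by
  rw [credalUtility_eq_div δ γ hx.ne', div_pos_iff_of_pos_right (pow_pos hx 2), sub_pos]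

theorem convexOn_one_div_credalUtility :
    ConvexOn 𝕜 {x | 0 < x ∧ γ < δ * x} fun x ↦ 1 / credalUtility δ γ x := by
  have hquot : ConvexOn 𝕜 {x | 0 < δ * x - γ} fun x ↦ x ^ 2 / (δ * x - γ) :=
    convexOn_affineMap_sq_div_affineMap (AffineMap.id 𝕜 𝕜)
      (δ • AffineMap.id 𝕜 𝕜 - AffineMap.const 𝕜 𝕜 γ)
  have hdomain : {x | 0 < x ∧ γ < δ * x} = Ioi 0 ∩ {x | 0 < δ * x - γ} := by
    simp only [sub_pos]
    rfl
  rw [hdomain]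
  refine (hquot.subset inter_subset_right ((convex_Ioi 0).inter hquot.1)).congr ?_
  rintro x ⟨hx : 0 < x, -⟩
  simp only [credalUtility_eq_div δ γ hx.ne', one_div_div]

theorem stmt_13_general :
    (∀ x, 0 < x → γ < δ * x → 0 < credalUtility δ γ x) ∧
      ConvexOn 𝕜 {x | 0 < x ∧ γ < δ * x} fun x ↦ 1 / credalUtility δ γ x :=
  ⟨fun _ hx ↦ (credalUtility_pos_iff δ γ hx).2, convexOn_one_div_credalUtility δ γ⟩

end CredalUtility

/-- For `0 < γ < δ`, the credal utility `g s = δ/s − γ/s²` is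
positive on `{1,…,K}` and (1/x)-convex. -/
theorem stmt_13 (δ γ : ℝ) (hγ : 0 < γ) (hγδ : γ < δ) (K : ℕ) (hK : 3 ≤ K)
    (g : ℕ → ℝ) (hg : ∀ s : ℕ, g s = δ / (s : ℝ) - γ / (s : ℝ) ^ 2) :
    (∀ s, 1 ≤ s → s ≤ K → 0 < g s) ∧
    (∀ s, 1 ≤ s → s + 2 ≤ K →
      1 / g (s + 1) ≤ (1 / g s + 1 / g (s + 2)) / 2) := by
  obtain rfl : g = fun s : ℕ ↦ credalUtility δ γ s := funext hg
  obtain ⟨hpos, hconvex⟩ := stmt_13_general δ γ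
  have hmem : ∀ s : ℕ, 1 ≤ s → (0 : ℝ) < s ∧ γ < δ * s := fun s hs ↦
    ⟨Nat.cast_pos.2 hs, hγδ.trans_le <|
      le_mul_of_one_le_right (hγ.trans hγδ).le (Nat.one_le_cast.2 hs)⟩
  refine ⟨fun s hs _ ↦ hpos s (hmem s hs).1 (hmem s hs).2, fun s hs _ ↦ ?_⟩
  have hmid : ((s + 1 : ℕ) : ℝ) = ((s : ℝ) + (s + 2 : ℕ)) / 2 := by push_cast; ring
  simpa only [hmid] using
    map_add_div_two_le_of_convexOn hconvex (hmem s hs) (hmem (s + 2) (by omega))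
end

section
/- Let K ≥ 3 be an integer and let α, β be real numbers with 0 ≤ α ≤ (K−1)/K and β ≥ log_{1/(K−1)}(K/2) + 1 (equivalently β ≥ 1 − ln(K/2)/ln(K−1)) and β > 0. Then the generalized reject option utility g_{α,β}(s) = 1 − α·((s−1)/(K−1))^β satisfies g_{α,β}(s) ≥ 1/s for every s ∈ {1,…,K}; i.e., under these parameter bounds g_{α,β} is lower bounded by the precision utility. -/
/-!
Put `n = K - 1`, `t = s - 1` and `c = log_n ((n + 1) / 2)`, so that `n ^ c = (1 + n) / 2` and
`β ≥ 1 - c`. With `t = n ^ θ` and `0 ≤ θ ≤ 1`, concavity of `x ↦ x ^ θ` at the midpoint of `1` and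
`n` gives `(1 + t) / 2 ≤ ((1 + n) / 2) ^ θ = t ^ c`. Dividing by `n ^ c` bounds `(t / n) ^ (1 - c)`,
and hence `(t / n) ^ β`, by `(1 - 1 / s) / (1 - 1 / K)`; the bound on `α` cancels the denominator.
-/

section WeightedMean

variable {a b n t : ℝ}

lemma rpow_logb_comm {x y : ℝ} (hx : 0 < x) (hy : 0 < y) :
    x ^ Real.logb n y = y ^ Real.logb n x := by
  rw [Real.rpow_def_of_pos hx, Real.rpow_def_of_pos hy, Real.logb, Real.logb]
  ring_nf

lemma weighted_mean_one_pos (ha : 0 ≤ a) (hb : 0 ≤ b) (hab : a + b = 1) (ht : 0 < t) :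
    0 < a + b * t := by
  simpa using (convex_Ioi (0 : ℝ)) (Set.mem_Ioi.2 one_pos) (Set.mem_Ioi.2 ht) ha hb hab

lemma weighted_mean_one_le_rpow_logb (ha : 0 ≤ a) (hb : 0 ≤ b) (hab : a + b = 1)
    (hn : 1 < n) (ht : 1 ≤ t) (htn : t ≤ n) :
    a + b * t ≤ t ^ Real.logb n (a + b * n) := by
  have hn0 : 0 < n := by linarith
  have ht0 : 0 < t := by linarith
  have hθ0 : 0 ≤ Real.logb n t := Real.logb_nonneg hn ht
  have hθ1 : Real.logb n t ≤ 1 := by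
    rwa [Real.logb_le_iff_le_rpow hn ht0, Real.rpow_one]
  calc a + b * t = a * 1 ^ Real.logb n t + b * n ^ Real.logb n t := by
        rw [Real.one_rpow, mul_one, Real.rpow_logb hn0 hn.ne' ht0]
    _ ≤ (a * 1 + b * n) ^ Real.logb n t :=
        (Real.concaveOn_rpow hθ0 hθ1).2 (Set.mem_Ici.2 zero_le_one) (Set.mem_Ici.2 hn0.le)
          ha hb hab
    _ = t ^ Real.logb n (a + b * n) := by
        rw [mul_one, rpow_logb_comm (weighted_mean_one_pos ha hb hab hn0) ht0]

lemma div_rpow_one_sub_logb_le (ha : 0 ≤ a) (hb : 0 ≤ b) (hab : a + b = 1)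
    (hn : 1 < n) (ht : 1 ≤ t) (htn : t ≤ n) :
    (t / n) ^ (1 - Real.logb n (a + b * n)) ≤ t / n * ((a + b * n) / (a + b * t)) := by
  have hn0 : 0 < n := by linarith
  have ht0 : 0 < t := by linarith
  have hmean_n := weighted_mean_one_pos ha hb hab hn0
  have hmean_t := weighted_mean_one_pos ha hb hab ht0
  calc (t / n) ^ (1 - Real.logb n (a + b * n))
      = t / n * ((a + b * n) / t ^ Real.logb n (a + b * n)) := by
        rw [Real.rpow_sub (div_pos ht0 hn0), Real.rpow_one, Real.div_rpow ht0.le hn0.le,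
          Real.rpow_logb hn0 hn.ne' hmean_n, div_eq_mul_inv, inv_div]
    _ ≤ t / n * ((a + b * n) / (a + b * t)) := by
        gcongr
        exact weighted_mean_one_le_rpow_logb ha hb hab hn ht htn

end WeightedMean

section Utility

variable {K s β : ℝ}

lemma logb_one_div_sub_one_half_add_one_pos (hK : 2 < K) :
    0 < Real.logb (1 / (K - 1)) (K / 2) + 1 := by
  have hlt : Real.logb (K - 1) (K / 2) < 1 := by
    rw [Real.logb_lt_iff_lt_rpow (by linarith) (by linarith), Real.rpow_one]
    linarith
  rw [one_div, Real.logb_inv_base]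
  linarith

lemma sub_one_div_sub_one_rpow_le (hK : 2 < K) (hs : s = 1 ∨ s ∈ Set.Icc 2 K)
    (hβ : Real.logb (1 / (K - 1)) (K / 2) + 1 ≤ β) :
    ((s - 1) / (K - 1)) ^ β ≤ (1 - 1 / s) / ((K - 1) / K) := by
  rcases hs with rfl | ⟨hs2, hsK⟩
  · have hβ_ne : β ≠ 0 := ((logb_one_div_sub_one_half_add_one_pos hK).trans_le hβ).ne'
    simp [Real.zero_rpow hβ_ne]
  have hK1 : 0 < K - 1 := by linarith
  have hs1 : 0 < s - 1 := by linarith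
  have hmean (x : ℝ) : 1 / 2 + 1 / 2 * (x - 1) = x / 2 := by ring
  have hexp : 1 - Real.logb (K - 1) (K / 2) ≤ β := by
    rw [one_div, Real.logb_inv_base] at hβ
    linarith
  have hcrit := div_rpow_one_sub_logb_le (a := 1 / 2) (b := 1 / 2) (n := K - 1) (t := s - 1)
    (by norm_num) (by norm_num) (by norm_num) (by linarith) (by linarith) (by linarith)
  rw [hmean, hmean] at hcrit
  calc ((s - 1) / (K - 1)) ^ β ≤ ((s - 1) / (K - 1)) ^ (1 - Real.logb (K - 1) (K / 2)) :=
        Real.rpow_le_rpow_of_exponent_ge (div_pos hs1 hK1)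
          ((div_le_one hK1).2 (by linarith)) hexp
    _ ≤ (s - 1) / (K - 1) * (K / 2 / (s / 2)) := hcrit
    _ = (1 - 1 / s) / ((K - 1) / K) := by
        have hs0 : s ≠ 0 := by linarith
        field_simp

end Utility

theorem stmt_17_general {K s α β : ℝ} (hK : 2 < K) (hs : s = 1 ∨ s ∈ Set.Icc 2 K)
    (hα : α ≤ (K - 1) / K) (hβ : Real.logb (1 / (K - 1)) (K / 2) + 1 ≤ β) :
    1 / s ≤ 1 - α * ((s - 1) / (K - 1)) ^ β := by
  have hα_max : 0 < (K - 1) / K := div_pos (by linarith) (by linarith)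
  have hbase : 0 ≤ (s - 1) / (K - 1) := by
    refine div_nonneg ?_ (by linarith)
    rcases hs with rfl | ⟨hs2, -⟩ <;> linarith
  have hpenalty : α * ((s - 1) / (K - 1)) ^ β ≤ 1 - 1 / s :=
    calc α * ((s - 1) / (K - 1)) ^ β ≤ (K - 1) / K * ((s - 1) / (K - 1)) ^ β := by gcongr
      _ ≤ (K - 1) / K * ((1 - 1 / s) / ((K - 1) / K)) := by
          gcongr
          exact sub_one_div_sub_one_rpow_le hK hs hβ
      _ = 1 - 1 / s := mul_div_cancel₀ _ hα_max.ne'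
  linarith

/-- For `K ≥ 3`, `0 ≤ α ≤ (K−1)/K`, `β > 0` and
`β ≥ log_{1/(K−1)}(K/2) + 1`, the generalized reject option utility
`g_{α,β}(s) = 1 − α·((s−1)/(K−1))^β` is lower bounded by precision:
`g_{α,β}(s) ≥ 1/s` for every `s ∈ {1,…,K}`. -/
theorem stmt_17 (K : ℕ) (hK : 3 ≤ K) (α β : ℝ)
    (hα0 : 0 ≤ α) (hα : α ≤ ((K : ℝ) - 1) / (K : ℝ))
    (hβ0 : 0 < β)
    (hβ : Real.logb (1 / ((K : ℝ) - 1)) ((K : ℝ) / 2) + 1 ≤ β) :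
    ∀ s : ℕ, 1 ≤ s → s ≤ K →
      1 / (s : ℝ) ≤ 1 - α * (((s : ℝ) - 1) / ((K : ℝ) - 1)) ^ β := by
  intro s hs1 hsK
  have hs : (s : ℝ) = 1 ∨ (2 : ℝ) ≤ s ∧ (s : ℝ) ≤ K := by norm_cast; lia
  exact stmt_17_general (by exact_mod_cast hK) hs hα hβ
end
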